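/- arXiv:2003.07020 — 2 statements merged into one kernel-verified Lean document; each statement's English description precedes it below -/
import Mathlib

section
/- Let N_t ≥ 3 and N_s ≥ 1 be integers, let α ∈ (0,1), let C_α be the N_t×N_t Strang-type α-circulant matrix, let A be a real symmetric negative semidefinite N_s×N_s matrix, and let τ > 0. Then the preconditioner matrix 𝒫_α = C_α ⊗ I_{N_s} − τ·(I_{N_t} ⊗ A) is invertible. -/
open Matrix Finset Kronecker

/-- The `N_t × N_t` Strang-type α-circulant matrix `C_α` (0-based indices). -/
noncomputable def strangCalpha (Nt : ℕ) (α : ℝ) : Matrix (Fin Nt) (Fin Nt) ℝ :=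
  Matrix.of fun i j =>
    if (i : ℕ) = (j : ℕ) then 3 / 2
    else if (i : ℕ) = (j : ℕ) + 1 then -2
    else if (i : ℕ) = (j : ℕ) + 2 then 1 / 2
    else if (i : ℕ) = 0 ∧ (j : ℕ) = Nt - 2 then α / 2
    else if (i : ℕ) = 0 ∧ (j : ℕ) = Nt - 1 then -2 * α
    else if (i : ℕ) = 1 ∧ (j : ℕ) = Nt - 1 then α / 2
    else 0

/-!
This is the G-stability argument for BDF2. If `X` lies in the kernel of `𝒫_α`, its time slices,
preceded by two ghost values, form a sequence `u` whose BDF2 difference is `τ A u (n + 2)` and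
whose first two terms are `α` times its last two. The identity
`4 ⟪u (n + 2), 3/2 u (n + 2) - 2 u (n + 1) + 1/2 u n⟫ = G (n + 1) - G n + ‖second difference‖ ^ 2`
with `G n = ‖u (n + 1)‖ ^ 2 + ‖2 u (n + 1) - u n‖ ^ 2` makes the energy `G` nonincreasing, while the
`α`-periodicity gives `G 0 = α ^ 2 * G N_t`. As `α ^ 2 < 1`, the energy vanishes, and so does `X`.
-/

section BDF2

open scoped RealInnerProductSpace

variable {E : Type*}

/-- The second-order backward difference formula (BDF2), without the factor `1 / h` of the step
size; `bdf2Diff u n` approximates the derivative at the index `n + 2`. -/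
noncomputable def bdf2Diff [AddCommGroup E] [Module ℝ E] (u : ℕ → E) (n : ℕ) : E :=
  (3 / 2 : ℝ) • u (n + 2) - (2 : ℝ) • u (n + 1) + (1 / 2 : ℝ) • u n

variable [NormedAddCommGroup E] [InnerProductSpace ℝ E]

/-- Dahlquist's G-stability energy of BDF2, scaled by `4`; it is attached to the pair
`(u n, u (n + 1))`. -/
noncomputable def bdf2Energy (u : ℕ → E) (n : ℕ) : ℝ :=
  ‖u (n + 1)‖ ^ 2 + ‖(2 : ℝ) • u (n + 1) - u n‖ ^ 2

variable {u : ℕ → E} {n : ℕ}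

lemma bdf2Energy_nonneg (u : ℕ → E) (n : ℕ) : 0 ≤ bdf2Energy u n := by
  unfold bdf2Energy
  positivity

lemma bdf2Energy_eq_zero_iff : bdf2Energy u n = 0 ↔ u n = 0 ∧ u (n + 1) = 0 := by
  rw [bdf2Energy, add_eq_zero_iff_of_nonneg (by positivity) (by positivity),
    sq_eq_zero_iff, sq_eq_zero_iff, norm_eq_zero, norm_eq_zero, and_comm]
  refine and_congr_left fun h => ?_
  rw [h, smul_zero, zero_sub, neg_eq_zero]

lemma bdf2Energy_smul {v : ℕ → E} {c : ℝ} {m : ℕ} (h : u n = c • v m)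
    (h' : u (n + 1) = c • v (m + 1)) : bdf2Energy u n = c ^ 2 * bdf2Energy v m := by
  rw [bdf2Energy, bdf2Energy, h, h', smul_comm, ← smul_sub, norm_smul, norm_smul, mul_pow, mul_pow,
    Real.norm_eq_abs, sq_abs, mul_add]

lemma four_mul_inner_bdf2Diff (u : ℕ → E) (n : ℕ) :
    4 * ⟪u (n + 2), bdf2Diff u n⟫ =
      bdf2Energy u (n + 1) - bdf2Energy u n + ‖u (n + 2) - (2 : ℝ) • u (n + 1) + u n‖ ^ 2 := by
  simp only [bdf2Energy, bdf2Diff, ← real_inner_self_eq_norm_sq, inner_add_left, inner_add_right,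
    inner_sub_left, inner_sub_right, real_inner_smul_left, real_inner_smul_right]
  rw [real_inner_comm (u (n + 2)) (u (n + 1)), real_inner_comm (u (n + 2)) (u n),
    real_inner_comm (u (n + 1)) (u n)]
  ring

lemma bdf2Energy_succ_le (h : ⟪u (n + 2), bdf2Diff u n⟫ ≤ 0) :
    bdf2Energy u (n + 1) ≤ bdf2Energy u n := by
  have hdefect := sq_nonneg ‖u (n + 2) - (2 : ℝ) • u (n + 1) + u n‖
  linarith [four_mul_inner_bdf2Diff u n]

lemma antitoneOn_bdf2Energy {N : ℕ} (h : ∀ n < N, ⟪u (n + 2), bdf2Diff u n⟫ ≤ 0) :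
    AntitoneOn (bdf2Energy u) (Set.Iic N) :=
  antitoneOn_of_add_one_le Set.ordConnected_Iic fun n _ _ hn => bdf2Energy_succ_le (h n hn)

lemma eq_zero_of_inner_bdf2Diff_nonpos {N : ℕ} {α : ℝ} (hα : |α| < 1) (h₀ : u 0 = α • u N)
    (h₁ : u 1 = α • u (N + 1)) (h : ∀ n < N, ⟪u (n + 2), bdf2Diff u n⟫ ≤ 0) (hn : n ≤ N) :
    u (n + 1) = 0 := by
  have hanti := antitoneOn_bdf2Energy h
  have hperiod : bdf2Energy u 0 = α ^ 2 * bdf2Energy u N := bdf2Energy_smul h₀ h₁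
  have hdecay : bdf2Energy u N ≤ bdf2Energy u 0 := hanti N.zero_le Set.self_mem_Iic N.zero_le
  have hα' : α ^ 2 < 1 := sq_lt_one_iff_abs_lt_one α |>.2 hα
  have hstart : bdf2Energy u 0 ≤ 0 := by nlinarith [bdf2Energy_nonneg u N]
  have hle : bdf2Energy u n ≤ 0 := (hanti N.zero_le hn n.zero_le).trans hstart
  exact (bdf2Energy_eq_zero_iff.1 (hle.antisymm (bdf2Energy_nonneg u n))).2

end BDF2

lemma sum_single_add_single_add_single_smul {ι R M : Type*} [Fintype ι] [DecidableEq ι] [Semiring R]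
    [AddCommMonoid M] [Module R M] (p q r : ι) (a b c : R) (x : ι → M) :
    ∑ j, (Pi.single p a + Pi.single q b + Pi.single r c : ι → R) j • x j =
      a • x p + b • x q + c • x r := by
  simp only [Pi.add_apply, add_smul, sum_add_distrib, Pi.single_apply, ite_smul, zero_smul,
    sum_ite_eq', mem_univ, if_true]

section StrangCirculant

open scoped RealInnerProductSpace

variable {E : Type*} {Nt : ℕ}

/-- The sequence `α x_{Nt-2}, α x_{Nt-1}, x_0, …, x_{Nt-1}`, continued by zeros: the vector `x`
preceded by the two ghost values that encode the `α`-periodic initial condition of `C_α`.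
The entry `x i` sits at the index `i + 2`. -/
noncomputable def ghostExtend [AddCommGroup E] [Module ℝ E] (α : ℝ) (x : Fin Nt → E) : ℕ → E
  | 0 => α • Function.extend Fin.val x 0 (Nt - 2)
  | 1 => α • Function.extend Fin.val x 0 (Nt - 1)
  | n + 2 => Function.extend Fin.val x 0 n

lemma strangCalpha_row_zero (hNt : 3 ≤ Nt) (α : ℝ) :
    strangCalpha Nt α ⟨0, by omega⟩ =
      Pi.single ⟨0, by omega⟩ (3 / 2) + Pi.single ⟨Nt - 1, by omega⟩ (-2 * α) +
        Pi.single ⟨Nt - 2, by omega⟩ (α / 2) := by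
  ext ⟨j, hj⟩
  simp only [strangCalpha, of_apply, Pi.add_apply, Pi.single_apply, Fin.mk.injEq]
  grind

lemma strangCalpha_row_one (hNt : 3 ≤ Nt) (α : ℝ) :
    strangCalpha Nt α ⟨1, by omega⟩ =
      Pi.single ⟨1, by omega⟩ (3 / 2) + Pi.single ⟨0, by omega⟩ (-2) +
        Pi.single ⟨Nt - 1, by omega⟩ (α / 2) := by
  ext ⟨j, hj⟩
  simp only [strangCalpha, of_apply, Pi.add_apply, Pi.single_apply, Fin.mk.injEq]
  grind

lemma strangCalpha_row_add_two (α : ℝ) {k : ℕ} (hk : k + 2 < Nt) :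
    strangCalpha Nt α ⟨k + 2, hk⟩ =
      Pi.single ⟨k + 2, hk⟩ (3 / 2) + Pi.single ⟨k + 1, by omega⟩ (-2) +
        Pi.single ⟨k, by omega⟩ (1 / 2) := by
  ext ⟨j, hj⟩
  simp only [strangCalpha, of_apply, Pi.add_apply, Pi.single_apply, Fin.mk.injEq]
  grind

section Module

variable [AddCommGroup E] [Module ℝ E]

lemma ghostExtend_add_two (α : ℝ) (x : Fin Nt → E) {n : ℕ} (hn : n < Nt) :
    ghostExtend α x (n + 2) = x ⟨n, hn⟩ :=
  Fin.val_injective.extend_apply x 0 ⟨n, hn⟩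

lemma ghostExtend_zero (hNt : 2 ≤ Nt) (α : ℝ) (x : Fin Nt → E) :
    ghostExtend α x 0 = α • x ⟨Nt - 2, by omega⟩ :=
  congrArg (α • ·) (Fin.val_injective.extend_apply x 0 ⟨Nt - 2, by omega⟩)

lemma ghostExtend_one (hNt : 1 ≤ Nt) (α : ℝ) (x : Fin Nt → E) :
    ghostExtend α x 1 = α • x ⟨Nt - 1, by omega⟩ :=
  congrArg (α • ·) (Fin.val_injective.extend_apply x 0 ⟨Nt - 1, by omega⟩)

lemma ghostExtend_zero_eq_smul (hNt : 2 ≤ Nt) (α : ℝ) (x : Fin Nt → E) :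
    ghostExtend α x 0 = α • ghostExtend α x Nt := by
  obtain ⟨m, rfl⟩ := Nat.exists_eq_add_of_le' hNt
  rfl

lemma ghostExtend_one_eq_smul (hNt : 1 ≤ Nt) (α : ℝ) (x : Fin Nt → E) :
    ghostExtend α x 1 = α • ghostExtend α x (Nt + 1) := by
  obtain ⟨m, rfl⟩ := Nat.exists_eq_add_of_le' hNt
  rfl

lemma sum_strangCalpha_smul (hNt : 3 ≤ Nt) (α : ℝ) (x : Fin Nt → E) (i : Fin Nt) :
    ∑ j, strangCalpha Nt α i j • x j = bdf2Diff (ghostExtend α x) i := by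
  have hghost {n : ℕ} (hn : n < Nt) := ghostExtend_add_two α x hn
  rcases i with ⟨_ | _ | k, hi⟩
  · rw [strangCalpha_row_zero hNt, sum_single_add_single_add_single_smul, bdf2Diff, hghost hi,
      ghostExtend_one (by omega), ghostExtend_zero (by omega)]
    module
  · rw [strangCalpha_row_one hNt, sum_single_add_single_add_single_smul, bdf2Diff, hghost hi,
      hghost (n := 0) (by omega), ghostExtend_one (by omega)]
    module
  · rw [strangCalpha_row_add_two, sum_single_add_single_add_single_smul, bdf2Diff, hghost hi,
      hghost (n := k + 1) (by omega), hghost (n := k) (by omega)]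
    module

end Module

lemma eq_zero_of_inner_strangCalpha_nonpos [NormedAddCommGroup E] [InnerProductSpace ℝ E]
    (hNt : 3 ≤ Nt) {α : ℝ} (hα : |α| < 1) {x : Fin Nt → E}
    (hx : ∀ i, ⟪x i, ∑ j, strangCalpha Nt α i j • x j⟫ ≤ 0) : x = 0 := by
  have hdiss : ∀ n < Nt, ⟪ghostExtend α x (n + 2), bdf2Diff (ghostExtend α x) n⟫ ≤ 0 := by
    intro n hn
    have hxn := hx ⟨n, hn⟩
    rwa [sum_strangCalpha_smul hNt, ← ghostExtend_add_two α x hn] at hxn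
  funext i
  have hi : ghostExtend α x (i + 2) = 0 :=
    eq_zero_of_inner_bdf2Diff_nonpos hα (ghostExtend_zero_eq_smul (by omega) α x)
      (ghostExtend_one_eq_smul (by omega) α x) hdiss i.2
  rwa [ghostExtend_add_two α x i.2] at hi

end StrangCirculant

section Kronecker

variable {m n : Type*} [Fintype m] [DecidableEq m] [Fintype n] [DecidableEq n]

lemma kronecker_one_sub_smul_one_kronecker_mulVec_vec {R : Type*} [CommRing R]
    (B : Matrix n n R) (A : Matrix m m R) (τ : R) (X : Matrix m n R) :
    (B ⊗ₖ (1 : Matrix m m R) - τ • ((1 : Matrix n n R) ⊗ₖ A)) *ᵥ vec X =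
      vec (X * Bᵀ - τ • (A * X)) := by
  rw [sub_mulVec, smul_mulVec, kronecker_mulVec_vec, kronecker_mulVec_vec, Matrix.one_mul,
    transpose_one, Matrix.mul_one, vec_sub, vec_smul]

lemma isUnit_kronecker_one_sub_smul_one_kronecker {K : Type*} [Field K] [LinearOrder K]
    [IsStrictOrderedRing K] {B : Matrix n n K} {A : Matrix m m K} {τ : K}
    (hB : ∀ x : n → m → K, (∀ i, x i ⬝ᵥ ∑ j, B i j • x j ≤ 0) → x = 0)
    (hA : ∀ z : m → K, z ⬝ᵥ (A *ᵥ z) ≤ 0) (hτ : 0 ≤ τ) :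
    IsUnit (B ⊗ₖ (1 : Matrix m m K) - τ • ((1 : Matrix n n K) ⊗ₖ A)) := by
  rw [← mulVec_injective_iff_isUnit, ← coe_mulVecLin, injective_iff_map_eq_zero]
  intro v hv
  obtain ⟨X, rfl⟩ := vec_bijective.surjective v
  rw [mulVecLin_apply, kronecker_one_sub_smul_one_kronecker_mulVec_vec, vec_eq_zero_iff,
    sub_eq_zero] at hv
  have hcol (i : n) : ∑ j, B i j • X.col j = τ • (A *ᵥ X.col i) := by
    ext a
    simpa [Matrix.mul_apply, mulVec, dotProduct, mul_comm] using congrFun (congrFun hv a) i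
  have hX : X.col = 0 := hB X.col fun i => by
    rw [hcol, dotProduct_smul, smul_eq_mul]
    exact mul_nonpos_of_nonneg_of_nonpos hτ (hA _)
  rw [vec_eq_zero_iff]
  exact transpose_eq_zero.1 hX

end Kronecker

theorem stmt13_general {ι : Type*} [Fintype ι] [DecidableEq ι] {Nt : ℕ} (hNt : 3 ≤ Nt) {α : ℝ}
    (hα : |α| < 1) {A : Matrix ι ι ℝ} (hA : ∀ z : ι → ℝ, z ⬝ᵥ (A *ᵥ z) ≤ 0) {τ : ℝ} (hτ : 0 ≤ τ) :
    IsUnit (strangCalpha Nt α ⊗ₖ (1 : Matrix ι ι ℝ) -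
      τ • ((1 : Matrix (Fin Nt) (Fin Nt) ℝ) ⊗ₖ A)) := by
  refine isUnit_kronecker_one_sub_smul_one_kronecker (fun x hx => ?_) hA hτ
  have hzero : (fun i => WithLp.toLp 2 (x i) : Fin Nt → EuclideanSpace ℝ ι) = 0 :=
    eq_zero_of_inner_strangCalpha_nonpos hNt hα fun i => by
      simpa only [← WithLp.toLp_smul, ← WithLp.toLp_sum, EuclideanSpace.inner_toLp_toLp,
        star_trivial, dotProduct_comm] using hx i
  funext i
  exact (WithLp.toLp_eq_zero 2).1 (congrFun hzero i)

/-- For `α ∈ (0,1)`, `A` real symmetric negative semidefinite and `τ > 0`, the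
preconditioner `𝒫_α = C_α ⊗ I_{N_s} − τ (I_{N_t} ⊗ A)` is invertible. -/
theorem stmt13 (Nt Ns : ℕ) (hNt : 3 ≤ Nt) (hNs : 1 ≤ Ns) (α : ℝ)
    (hα : α ∈ Set.Ioo (0 : ℝ) 1)
    (A : Matrix (Fin Ns) (Fin Ns) ℝ) (hAsymm : A.IsSymm)
    (hAnsd : ∀ z : Fin Ns → ℝ, z ⬝ᵥ (A *ᵥ z) ≤ 0)
    (τ : ℝ) (hτ : 0 < τ) :
    IsUnit (strangCalpha Nt α ⊗ₖ (1 : Matrix (Fin Ns) (Fin Ns) ℝ) -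
      τ • ((1 : Matrix (Fin Nt) (Fin Nt) ℝ) ⊗ₖ A)) := by
  exact stmt13_general hNt (abs_lt.2 ⟨by linarith [hα.1], hα.2⟩) hAnsd hτ.le
end

section
/- Let γ ∈ (1,2), let N ≥ 3 be an integer, and let T be the (N−1)×(N−1) real symmetric Toeplitz matrix with entries T_{ij} = ω_{i−j}^{(γ)}, where ω_ℓ^{(γ)} = (−1)^ℓ·Γ(1+γ)/(Γ(1+γ/2−ℓ)·Γ(1+γ/2+ℓ)). Then T is positive definite, i.e., zᵀTz > 0 for every nonzero z ∈ ℝ^{N−1}. -/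
open Matrix Real

/-- The fractional centred difference coefficients
`ω_ℓ^{(γ)} = (−1)^ℓ Γ(1+γ) / (Γ(1+γ/2−ℓ) Γ(1+γ/2+ℓ))`, `ℓ ∈ ℤ`. -/
noncomputable def omegaFCD (γ : ℝ) (l : ℤ) : ℝ :=
  (-1 : ℝ) ^ l * Real.Gamma (1 + γ) /
    (Real.Gamma (1 + γ / 2 - l) * Real.Gamma (1 + γ / 2 + l))

/-- The `(N−1)×(N−1)` symmetric Toeplitz matrix `T_{ij} = ω_{i−j}^{(γ)}` of the
fractional centred difference discretization. -/
noncomputable def toeplitzFCD (γ : ℝ) (N : ℕ) : Matrix (Fin (N - 1)) (Fin (N - 1)) ℝ :=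
  Matrix.of fun i j => omegaFCD γ ((i : ℤ) - (j : ℤ))

/-!
The coefficients satisfy `(l + 1 + γ/2) ω_{l+1} = (l - γ/2) ω_l`. Read as a recursion from
`ω_0 > 0` with `0 < γ/2 < 1`, this makes `ω_l` negative for `l ≠ 0`. Read as
`γ ω_l = F_{l-1} - F_l` with `F_l = (l - γ/2) ω_l`, it makes sums of consecutive coefficients
telescope, and `F_l` is negative for `l ≥ 0` and positive for `l < 0`. A row of `T` runs through
`ω_l` on an interval containing `0`, so its sum is positive; since the off-diagonal entries are
negative, `T` is strictly diagonally dominant. By Gershgorin, all eigenvalues of `T` are positive.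
-/

section DiagonallyDominant

open scoped ComplexOrder

variable {𝕜 n : Type*} [RCLike 𝕜] [Fintype n] [DecidableEq n] {A : Matrix n n 𝕜}

theorem hasEigenvalue_toLin'_eigenvalues (hA : A.IsHermitian) (i : n) :
    Module.End.HasEigenvalue (toLin' A) (hA.eigenvalues i : 𝕜) := by
  rw [Module.End.hasEigenvalue_iff_mem_spectrum, spectrum_toLin']
  exact (spectrum.algebraMap_mem_iff 𝕜).2 (hA.eigenvalues_mem_spectrum_real i)

theorem posDef_of_sum_row_lt_diag (hA : A.IsHermitian)
    (h : ∀ k, ∑ j ∈ Finset.univ.erase k, ‖A k j‖ < RCLike.re (A k k)) : A.PosDef := by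
  refine hA.posDef_iff_eigenvalues_pos.2 fun i ↦ ?_
  obtain ⟨k, hk⟩ := eigenvalue_mem_ball (hasEigenvalue_toLin'_eigenvalues hA i)
  rw [mem_closedBall_iff_norm'] at hk
  have hre : RCLike.re (A k k) - hA.eigenvalues i ≤ ‖A k k - (hA.eigenvalues i : 𝕜)‖ := by
    simpa only [map_sub, RCLike.ofReal_re] using
      RCLike.re_le_norm (A k k - (hA.eigenvalues i : 𝕜))
  linarith [h k]

end DiagonallyDominant

theorem posDef_of_sum_row_pos {n : Type*} [Fintype n] {A : Matrix n n ℝ} (hA : A.IsSymm)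
    (hoff : ∀ i j, i ≠ j → A i j ≤ 0) (hrow : ∀ i, 0 < ∑ j, A i j) : A.PosDef := by
  classical
  refine posDef_of_sum_row_lt_diag (isHermitian_iff_isSymm.2 hA) fun k ↦ ?_
  have hnorm : ∑ j ∈ Finset.univ.erase k, ‖A k j‖ = -∑ j ∈ Finset.univ.erase k, A k j := by
    rw [← Finset.sum_neg_distrib]
    exact Finset.sum_congr rfl fun j hj ↦
      norm_of_nonpos (hoff k j (Finset.ne_of_mem_erase hj).symm)
  have hsplit := Finset.add_sum_erase Finset.univ (A k) (Finset.mem_univ k)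
  rw [hnorm, RCLike.re_to_real]
  linarith [hrow k]

-- At the poles Lean's `Gamma` is `0`, so `(Gamma s)⁻¹ = 0`, as for the entire function `1 / Γ`.
theorem inv_realGamma_eq_self_mul_inv_realGamma_add_one (s : ℝ) :
    (Gamma s)⁻¹ = s * (Gamma (s + 1))⁻¹ := by
  have h := Complex.one_div_Gamma_eq_self_mul_one_div_Gamma_add_one s
  rw [← Complex.ofReal_one, ← Complex.ofReal_add, Complex.Gamma_ofReal, Complex.Gamma_ofReal] at h
  exact_mod_cast h

theorem omegaFCD_neg (γ : ℝ) (l : ℤ) : omegaFCD γ (-l) = omegaFCD γ l := by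
  simp only [omegaFCD, Int.cast_neg, sub_neg_eq_add, ← sub_eq_add_neg, _root_.zpow_neg,
    ← _root_.inv_zpow, inv_neg_one, mul_comm (Gamma (1 + γ / 2 + l))]

theorem mul_omegaFCD_add_one (γ : ℝ) (l : ℤ) :
    (l + 1 + γ / 2) * omegaFCD γ (l + 1) = (l - γ / 2) * omegaFCD γ l := by
  have hsub := inv_realGamma_eq_self_mul_inv_realGamma_add_one (γ / 2 - l)
  have hadd := inv_realGamma_eq_self_mul_inv_realGamma_add_one (1 + γ / 2 + l)
  rw [show γ / 2 - l + 1 = 1 + γ / 2 - l by ring] at hsub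
  have hpow : (-1 : ℝ) ^ (l + 1) = -(-1) ^ l := by
    rw [zpow_add_one₀ (by norm_num), mul_neg_one]
  simp only [omegaFCD, div_eq_mul_inv _ (_ * _), mul_inv, Int.cast_add, Int.cast_one, hpow]
  rw [show 1 + γ / 2 - (l + 1) = γ / 2 - l by ring,
    show 1 + γ / 2 + (l + 1 : ℝ) = 1 + γ / 2 + l + 1 by ring, hsub, hadd]
  ring

theorem mul_sum_range_omegaFCD (γ : ℝ) (l : ℤ) (n : ℕ) :
    γ * ∑ j ∈ Finset.range n, omegaFCD γ (l - j) =
      (l - n - γ / 2) * omegaFCD γ (l - n) - (l - γ / 2) * omegaFCD γ l := by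
  have hstep (j : ℕ) : γ * omegaFCD γ (l - j) =
      (l - (j + 1 : ℕ) - γ / 2) * omegaFCD γ (l - (j + 1 : ℕ)) -
        (l - j - γ / 2) * omegaFCD γ (l - j) := by
    have h := mul_omegaFCD_add_one γ (l - (j + 1 : ℕ))
    rw [show l - ((j + 1 : ℕ) : ℤ) + 1 = l - j by push_cast; ring] at h
    push_cast at h ⊢
    linarith
  simp only [Finset.mul_sum, hstep]
  simpa using
    Finset.sum_range_sub (fun j : ℕ ↦ (l - j - γ / 2 : ℝ) * omegaFCD γ (l - j)) n

section Signs

variable {γ : ℝ}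

theorem omegaFCD_zero_pos (hγ : -1 < γ) : 0 < omegaFCD γ 0 := by
  have hnum : 0 < Gamma (1 + γ) := Gamma_pos_of_pos (by linarith)
  have hden : 0 < Gamma (1 + γ / 2) := Gamma_pos_of_pos (by linarith)
  simp only [omegaFCD, zpow_zero, Int.cast_zero, sub_zero, add_zero, one_mul]
  positivity

theorem sub_mul_omegaFCD_natCast_neg (hγ : γ ∈ Set.Ioo (0 : ℝ) 2) (n : ℕ) :
    (n - γ / 2) * omegaFCD γ n < 0 := by
  obtain ⟨hγ0, hγ2⟩ := hγ
  induction n with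
  | zero =>
    simpa using mul_pos (half_pos hγ0) (omegaFCD_zero_pos (by linarith))
  | succ n ih =>
    have hrec := mul_omegaFCD_add_one γ n
    push_cast at hrec ⊢
    have hneg : omegaFCD γ (n + 1) < 0 :=
      neg_of_mul_neg_right (hrec.trans_lt ih) (by positivity)
    exact mul_neg_of_pos_of_neg (by linarith [n.cast_nonneg (α := ℝ)]) hneg

theorem omegaFCD_lt_zero (hγ : γ ∈ Set.Ioo (0 : ℝ) 2) {l : ℤ} (hl : l ≠ 0) :
    omegaFCD γ l < 0 := by
  have hnat {n : ℕ} (hn : n ≠ 0) : omegaFCD γ n < 0 := by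
    have hn1 : (1 : ℝ) ≤ n := Nat.one_le_cast.2 (Nat.one_le_iff_ne_zero.2 hn)
    exact neg_of_mul_neg_right (sub_mul_omegaFCD_natCast_neg hγ n) (by linarith [hγ.2])
  obtain ⟨n, rfl | rfl⟩ := l.eq_nat_or_neg
  · exact hnat (by simpa using hl)
  · exact omegaFCD_neg γ n ▸ hnat (by simpa using hl)

theorem sum_range_omegaFCD_pos (hγ : γ ∈ Set.Ioo (0 : ℝ) 2) {i n : ℕ} (hi : i < n) :
    0 < ∑ j ∈ Finset.range n, omegaFCD γ (i - j) := by
  have hin : (i : ℝ) < n := Nat.cast_lt.2 hi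
  have hleft : 0 < ((i : ℝ) - n - γ / 2) * omegaFCD γ (i - n) :=
    mul_pos_of_neg_of_neg (by linarith [hγ.1]) (omegaFCD_lt_zero hγ (by omega))
  have hright := sub_mul_omegaFCD_natCast_neg hγ i
  have hsum := mul_sum_range_omegaFCD γ i n
  rw [Int.cast_natCast] at hsum
  exact pos_of_mul_pos_right (hsum ▸ by linarith) hγ.1.le

end Signs

theorem isSymm_toeplitzFCD (γ : ℝ) (N : ℕ) : (toeplitzFCD γ N).IsSymm :=
  IsSymm.ext fun i j ↦ by
    simp only [toeplitzFCD, of_apply]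
    rw [← omegaFCD_neg, neg_sub]

theorem stmt19_general {γ : ℝ} (hγ : γ ∈ Set.Ioo (0 : ℝ) 2) (N : ℕ) :
    (toeplitzFCD γ N).PosDef := by
  refine posDef_of_sum_row_pos (isSymm_toeplitzFCD γ N) (fun i j hij ↦ ?_) fun i ↦ ?_
  · exact (omegaFCD_lt_zero hγ (by omega)).le
  · simpa only [toeplitzFCD, of_apply,
      Fin.sum_univ_eq_sum_range fun j ↦ omegaFCD γ ((i : ℤ) - (j : ℤ))] using
      sum_range_omegaFCD_pos hγ i.isLt

/-- For `γ ∈ (1,2)` and `N ≥ 3`, the Toeplitz matrix `T` is positive definite: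
`zᵀ T z > 0` for every nonzero `z ∈ ℝ^{N−1}`. -/
theorem stmt19 (γ : ℝ) (hγ : γ ∈ Set.Ioo (1 : ℝ) 2) (N : ℕ) (hN : 3 ≤ N)
    (z : Fin (N - 1) → ℝ) (hz : z ≠ 0) :
    0 < z ⬝ᵥ (toeplitzFCD γ N *ᵥ z) :=
  (stmt19_general ⟨one_pos.trans hγ.1, hγ.2⟩ N).dotProduct_mulVec_pos hz
end
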